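/- Let G be a simple graph on n vertices and let α be a natural number such that every nonempty induced subgraph of G contains a vertex whose degree within that induced subgraph is at most α. Then for every integer k ≥ 1, the number of k-cliques of G is at most n · C(α, k−1), where C(α, k−1) is the binomial coefficient. -/

import Mathlib

/-!
Choose a vertex `v` of `S` with at most `d` neighbours in `S`. A `(k + 1)`-clique inside `S` either
avoids `v`, or is `v` together with a `k`-clique among those neighbours, of which there are at most
`d.choose k`. Deleting `v` and repeating charges at most `d.choose k` cliques to each vertex of `S`.
-/

section CliqueCount

open scoped Finset

variable {V : Type*} {G : SimpleGraph V}

/-- A `d`-degenerate graph: every nonempty finite induced subgraph has a vertex of degree at most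
`d`. Restricting to finite vertex sets is the usual convention for infinite graphs, and it keeps
`Set.ncard` away from its junk value `0` on infinite sets. -/
def IsDegenerate (G : SimpleGraph V) (d : ℕ) : Prop :=
  ∀ S : Set V, S.Finite → S.Nonempty → ∃ v ∈ S, {u ∈ S | G.Adj v u}.ncard ≤ d

variable [DecidableRel G.Adj]

theorem IsDegenerate.exists_card_filter_adj_le {d : ℕ} (hG : IsDegenerate G d) {S : Finset V}
    (hS : S.Nonempty) : ∃ v ∈ S, #{u ∈ S | G.Adj v u} ≤ d := by
  simpa [← Set.ncard_coe_finset] using hG S S.finite_toSet hS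

variable [DecidableEq V]

variable (G) in
/-- The `k`-cliques of `G` contained in the finite vertex set `S`, that is, the `k`-cliques of
`G[S]`, kept as sets of vertices of `G` so that different `S` can be compared. -/
def cliqueFinsetOn (S : Finset V) (k : ℕ) : Finset (Finset V) :=
  {t ∈ S.powersetCard k | G.IsClique t}

theorem mem_cliqueFinsetOn {S t : Finset V} {k : ℕ} :
    t ∈ cliqueFinsetOn G S k ↔ t ⊆ S ∧ G.IsNClique k t := by
  simp only [cliqueFinsetOn, Finset.mem_filter, Finset.mem_powersetCard,
    SimpleGraph.isNClique_iff]
  tauto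

theorem cliqueFinsetOn_univ [Fintype V] (k : ℕ) :
    cliqueFinsetOn G Finset.univ k = G.cliqueFinset k := by
  ext t
  simp [mem_cliqueFinsetOn]

theorem cliqueFinsetOn_empty_succ (k : ℕ) : cliqueFinsetOn G ∅ (k + 1) = ∅ := by
  simp [cliqueFinsetOn]

theorem card_cliqueFinsetOn_le_choose (S : Finset V) (k : ℕ) :
    #(cliqueFinsetOn G S k) ≤ (#S).choose k :=
  (Finset.card_filter_le _ _).trans_eq (Finset.card_powersetCard k S)

theorem filter_notMem_cliqueFinsetOn (S : Finset V) (v : V) (k : ℕ) :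
    {t ∈ cliqueFinsetOn G S k | v ∉ t} = cliqueFinsetOn G (S.erase v) k := by
  ext t
  simp only [Finset.mem_filter, mem_cliqueFinsetOn, Finset.subset_erase]
  tauto

theorem card_filter_mem_cliqueFinsetOn_succ {S : Finset V} {v : V} (hv : v ∈ S) (k : ℕ) :
    #{t ∈ cliqueFinsetOn G S (k + 1) | v ∈ t} = #(cliqueFinsetOn G {u ∈ S | G.Adj v u} k) := by
  refine Finset.card_nbij' (·.erase v) (insert v) ?erase_mem ?insert_mem ?insert_erase ?erase_insert
  case erase_mem =>
    intro t ht
    simp only [Finset.mem_coe, Finset.mem_filter, mem_cliqueFinsetOn] at ht ⊢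
    obtain ⟨⟨htS, ht⟩, hvt⟩ := ht
    refine ⟨fun u hu ↦ ?_, ht.erase_of_mem hvt⟩
    obtain ⟨huv, hut⟩ := Finset.mem_erase.mp hu
    exact Finset.mem_filter.mpr ⟨htS hut, ht.isClique hvt hut huv.symm⟩
  case insert_mem =>
    intro t ht
    simp only [Finset.mem_coe, Finset.mem_filter, mem_cliqueFinsetOn] at ht ⊢
    obtain ⟨htS, ht⟩ := ht
    have htv : ∀ u ∈ t, G.Adj v u := fun u hu ↦ (Finset.mem_filter.mp (htS hu)).2
    exact ⟨⟨Finset.insert_subset hv (htS.trans (Finset.filter_subset _ _)), ht.insert htv⟩,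
      Finset.mem_insert_self v t⟩
  case insert_erase =>
    intro t ht
    exact Finset.insert_erase (Finset.mem_filter.mp ht).2
  case erase_insert =>
    intro t ht
    have hvt : v ∉ t := fun h ↦
      G.loopless.irrefl v (Finset.mem_filter.mp ((mem_cliqueFinsetOn.mp ht).1 h)).2
    exact Finset.erase_insert hvt

theorem card_cliqueFinsetOn_succ_eq_add {S : Finset V} {v : V} (hv : v ∈ S) (k : ℕ) :
    #(cliqueFinsetOn G S (k + 1)) =
      #(cliqueFinsetOn G {u ∈ S | G.Adj v u} k) + #(cliqueFinsetOn G (S.erase v) (k + 1)) := by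
  rw [← card_filter_mem_cliqueFinsetOn_succ hv, ← filter_notMem_cliqueFinsetOn,
    Finset.card_filter_add_card_filter_not]

theorem clique_count_le_of_degenerate_general {d : ℕ} (hG : IsDegenerate G d) (S : Finset V)
    (k : ℕ) : #(cliqueFinsetOn G S (k + 1)) ≤ #S * d.choose k := by
  induction S using Finset.strongInduction with
  | H S ih =>
    obtain rfl | hS := S.eq_empty_or_nonempty
    · simp [cliqueFinsetOn_empty_succ]
    obtain ⟨v, hv, hvd⟩ := hG.exists_card_filter_adj_le hS
    calc #(cliqueFinsetOn G S (k + 1))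
        = #(cliqueFinsetOn G {u ∈ S | G.Adj v u} k) + #(cliqueFinsetOn G (S.erase v) (k + 1)) :=
          card_cliqueFinsetOn_succ_eq_add hv k
      _ ≤ d.choose k + #(S.erase v) * d.choose k :=
          add_le_add ((card_cliqueFinsetOn_le_choose _ k).trans (Nat.choose_le_choose k hvd))
            (ih _ (Finset.erase_ssubset hv))
      _ = #S * d.choose k := by
          rw [← Finset.card_erase_add_one hv]
          ring

end CliqueCount

/-- Claim 5.2 of the paper: an `α`-degenerate graph on `n` vertices has at most
`n · C(α, k-1)` many `k`-cliques, for every `k ≥ 1`. -/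
theorem clique_count_le_of_degenerate {V : Type*} [Fintype V] [DecidableEq V]
    (G : SimpleGraph V) [DecidableRel G.Adj] (α : ℕ)
    (hdeg : ∀ S : Set V, S.Nonempty → ∃ v ∈ S, {u ∈ S | G.Adj v u}.ncard ≤ α)
    (k : ℕ) (hk : 1 ≤ k) :
    (G.cliqueFinset k).card ≤ Fintype.card V * α.choose (k - 1) := by
  obtain ⟨k, rfl⟩ := Nat.exists_eq_add_of_le' hk
  simpa [cliqueFinsetOn_univ] using
    clique_count_le_of_degenerate_general (fun S _ ↦ hdeg S) Finset.univ k
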